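/- A ρ-maximal-correlation secure cipher is (t,ε)-Rényi-entropy-constrained secure with ε = 2^{(n−t)/2}·ρ: if ρ_m(M;C) ≤ ρ when M is uniform on [1:2ⁿ], then for every pmf p̂ on [1:2ⁿ] with Rényi entropy H₂(p̂) = −log₂ Σ_m p̂(m)² ≥ t, every f: [1:2ⁿ] → ℕ, and every guess f̃: 𝒞 → ℕ, the advantage ℙ̂{f(M)=f̃(C)} − max_i ℙ̂{f(M)=i} is at most 2^{(n−t)/2}·ρ, where ℙ̂ is the joint law of (M,C) when M ∼ p̂ is encrypted by the same cipher. -/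

import Mathlib

open BigOperators Finset
open scoped Classical

/-- Hirschfeld–Gebelein–Rényi maximal correlation of a joint pmf `p` on `X × Y`:
the supremum of `E[f(X) g(Y)]` over zero-mean, unit-second-moment `f`, `g`
(`sSup ∅ = 0` if no such functions exist). -/
noncomputable def maxCorr {X Y : Type*} [Fintype X] [Fintype Y] (p : X → Y → ℝ) : ℝ :=
  sSup {r : ℝ | ∃ f : X → ℝ, ∃ g : Y → ℝ,
    (∑ x, ∑ y, p x y * f x) = 0 ∧
    (∑ x, ∑ y, p x y * g y) = 0 ∧
    (∑ x, ∑ y, p x y * (f x) ^ 2) = 1 ∧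
    (∑ x, ∑ y, p x y * (g y) ^ 2) = 1 ∧
    r = ∑ x, ∑ y, p x y * f x * g y}

/-- Spectral (operator) norm of a real matrix. -/
noncomputable def specNorm {X Y : Type*} [Fintype X] [Fintype Y] (B : Matrix X Y ℝ) : ℝ :=
  sSup {r : ℝ | ∃ v : Y → ℝ, (∑ y, (v y) ^ 2) = 1 ∧
    r = Real.sqrt (∑ x, (B.mulVec v x) ^ 2)}

noncomputable def exq {X Y : Type*} [Fintype X] [Fintype Y] (p h : X → Y → ℝ) : ℝ :=
  ∑ x, ∑ y, p x y * h x y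

lemma exq_cs {X Y : Type*} [Fintype X] [Fintype Y] (p : X → Y → ℝ) (hp : ∀ x y, 0 ≤ p x y)
    (u v : X → Y → ℝ) :
    (exq p fun x y => u x y * v x y) ^ 2 ≤
      (exq p fun x y => u x y ^ 2) * (exq p fun x y => v x y ^ 2) := by
  have h := Finset.sum_mul_sq_le_sq_mul_sq (univ : Finset (X × Y))
    (fun z => √(p z.1 z.2) * u z.1 z.2) (fun z => √(p z.1 z.2) * v z.1 z.2)
  simp only [Fintype.sum_prod_type] at h
  have e1 : ∀ x y, √(p x y) * u x y * (√(p x y) * v x y) = p x y * (u x y * v x y) :=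
    fun x y => by linear_combination (u x y * v x y) * Real.mul_self_sqrt (hp x y)
  have e2 : ∀ x y, (√(p x y) * u x y) ^ 2 = p x y * u x y ^ 2 :=
    fun x y => by linear_combination (u x y ^ 2) * Real.mul_self_sqrt (hp x y)
  have e3 : ∀ x y, (√(p x y) * v x y) ^ 2 = p x y * v x y ^ 2 :=
    fun x y => by linear_combination (v x y ^ 2) * Real.mul_self_sqrt (hp x y)
  simpa only [e1, e2, e3, exq] using h

lemma maxCorr_bdd {X Y : Type*} [Fintype X] [Fintype Y] (p : X → Y → ℝ)
    (hp : ∀ x y, 0 ≤ p x y) : BddAbove {r : ℝ | ∃ f : X → ℝ, ∃ g : Y → ℝ,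
    (∑ x, ∑ y, p x y * f x) = 0 ∧
    (∑ x, ∑ y, p x y * g y) = 0 ∧
    (∑ x, ∑ y, p x y * (f x) ^ 2) = 1 ∧
    (∑ x, ∑ y, p x y * (g y) ^ 2) = 1 ∧
    r = ∑ x, ∑ y, p x y * f x * g y} := by
  refine ⟨1, ?_⟩
  rintro r ⟨f, g, -, -, h3, h4, rfl⟩
  have h := exq_cs p hp (fun x _ => f x) (fun _ y => g y)
  simp only [exq] at h
  rw [h3, h4] at h
  simp only [mul_assoc]
  nlinarith

lemma maxCorr_nonneg {X Y : Type*} [Fintype X] [Fintype Y] (p : X → Y → ℝ)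
    (hp : ∀ x y, 0 ≤ p x y) : 0 ≤ maxCorr p := by
  by_contra hneg
  have hn : ∀ f : X → ℝ, ∀ g : Y → ℝ, (∑ x, ∑ y, p x y * f x) = 0 →
    (∑ x, ∑ y, p x y * g y) = 0 →
    (∑ x, ∑ y, p x y * (f x) ^ 2) = 1 →
    (∑ x, ∑ y, p x y * (g y) ^ 2) = 1 → ∑ x, ∑ y, p x y * f x * g y ≤ maxCorr p :=
    fun f g h1 h2 h3 h4 => le_csSup (maxCorr_bdd p hp) ⟨f, g, h1, h2, h3, h4, rfl⟩
  apply hneg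
  apply Real.sSup_nonneg
  rintro r ⟨f, g, h1, h2, h3, h4, rfl⟩
  have := hn f g h1 h2 h3 h4
  have h' := hn (fun x => - f x) g (by simpa using h1) h2 (by simpa using h3) h4
  simp only [mul_neg, neg_mul, Finset.sum_neg_distrib] at h'
  linarith

lemma cov_le0 {X Y : Type*} [Fintype X] [Fintype Y] (p : X → Y → ℝ)
    (hp : ∀ x y, 0 ≤ p x y) (u : X → ℝ) (g : Y → ℝ)
    (hu : (∑ x, ∑ y, p x y * u x) = 0) (hg : (∑ x, ∑ y, p x y * g y) = 0) :
    ∑ x, ∑ y, p x y * u x * g y ≤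
      maxCorr p * (√(∑ x, ∑ y, p x y * u x ^ 2) * √(∑ x, ∑ y, p x y * g y ^ 2)) := by
  set a := ∑ x, ∑ y, p x y * u x ^ 2 with ha
  set b := ∑ x, ∑ y, p x y * g y ^ 2 with hb
  have ha0 : 0 ≤ a := Finset.sum_nonneg fun x _ => Finset.sum_nonneg fun y _ =>
    mul_nonneg (hp x y) (sq_nonneg _)
  have hb0 : 0 ≤ b := Finset.sum_nonneg fun x _ => Finset.sum_nonneg fun y _ =>
    mul_nonneg (hp x y) (sq_nonneg _)
  have h := exq_cs p hp (fun x _ => u x) (fun _ y => g y)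
  simp only [exq] at h
  rw [← ha, ← hb] at h
  simp only [← mul_assoc] at h
  have hm := maxCorr_nonneg p hp
  by_cases hab : a * b = 0
  · rw [hab] at h
    have : ∑ x, ∑ y, p x y * u x * g y = 0 := by nlinarith
    rw [this]; positivity
  have ha1 : a ≠ 0 := left_ne_zero_of_mul hab
  have hb1 : b ≠ 0 := right_ne_zero_of_mul hab
  have hsa : 0 < √a := Real.sqrt_pos.2 (lt_of_le_of_ne ha0 ha1.symm)
  have hsb : 0 < √b := Real.sqrt_pos.2 (lt_of_le_of_ne hb0 hb1.symm)
  have key : (√a)⁻¹ * (√b)⁻¹ * ∑ x, ∑ y, p x y * u x * g y ≤ maxCorr p := by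
    refine le_csSup (maxCorr_bdd p hp) ⟨fun x => (√a)⁻¹ * u x, fun y => (√b)⁻¹ * g y,
      ?_, ?_, ?_, ?_, ?_⟩
    · simp only [mul_left_comm _ (√a)⁻¹, ← Finset.mul_sum, hu, mul_zero]
    · simp only [mul_left_comm _ (√b)⁻¹, ← Finset.mul_sum, hg, mul_zero]
    · simp only [mul_pow, mul_left_comm _ ((√a)⁻¹ ^ 2), ← Finset.mul_sum]
      rw [← ha, inv_pow, Real.sq_sqrt ha0, inv_mul_cancel₀ ha1]
    · simp only [mul_pow, mul_left_comm _ ((√b)⁻¹ ^ 2), ← Finset.mul_sum]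
      rw [← hb, inv_pow, Real.sq_sqrt hb0, inv_mul_cancel₀ hb1]
    · simp only [Finset.mul_sum]
      exact Finset.sum_congr rfl fun x _ => Finset.sum_congr rfl fun y _ => by ring
  have h2 := mul_le_mul_of_nonneg_right key (mul_pos hsa hsb).le
  calc _ = _ := by field_simp
    _ ≤ _ := h2

lemma cov_le {X Y : Type*} [Fintype X] [Fintype Y] (p : X → Y → ℝ)
    (hp : ∀ x y, 0 ≤ p x y) (hp1 : ∑ x, ∑ y, p x y = 1) (u : X → ℝ) (g : Y → ℝ) :
    ∑ x, ∑ y, p x y * u x * g y ≤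
      (∑ x, ∑ y, p x y * u x) * (∑ x, ∑ y, p x y * g y) +
      maxCorr p * (√(∑ x, ∑ y, p x y * u x ^ 2) * √(∑ x, ∑ y, p x y * g y ^ 2)) := by
  set a := ∑ x, ∑ y, p x y * u x with ha
  set b := ∑ x, ∑ y, p x y * g y with hb
  have hz : ∀ z : ℝ, ∑ x, ∑ y, p x y * z = z := fun z => by
    simp only [← Finset.sum_mul, hp1, one_mul]
  have hz1 : ∀ z : ℝ, ∑ x, ∑ y, p x y * u x * z = a * z := fun z => by
    rw [ha]; simp only [Finset.sum_mul]
  have hz2 : ∀ z : ℝ, ∑ x, ∑ y, p x y * g y * z = b * z := fun z => by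
    rw [hb]; simp only [Finset.sum_mul]
  have h := cov_le0 p hp (fun x => u x - a) (fun y => g y - b)
    (by simp only [mul_sub, Finset.sum_sub_distrib, hz]; linarith)
    (by simp only [mul_sub, Finset.sum_sub_distrib, hz]; linarith)
  have e1 : ∑ x, ∑ y, p x y * (u x - a) * (g y - b) = (∑ x, ∑ y, p x y * u x * g y) - a * b := by
    have : ∀ x y, p x y * (u x - a) * (g y - b) =
      p x y * u x * g y - p x y * u x * b - p x y * g y * a + p x y * (a * b) := by
        intros; ring
    simp only [this, Finset.sum_add_distrib, Finset.sum_sub_distrib, hz, hz1, hz2]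
    ring
  have e2 : ∑ x, ∑ y, p x y * (u x - a) ^ 2 = (∑ x, ∑ y, p x y * u x ^ 2) - a ^ 2 := by
    have : ∀ x y, p x y * (u x - a) ^ 2 =
      p x y * u x ^ 2 - p x y * u x * (2 * a) + p x y * (a ^ 2) := by
        intros; ring
    simp only [this, Finset.sum_add_distrib, Finset.sum_sub_distrib, hz, hz1, hz2]
    ring
  have e3 : ∑ x, ∑ y, p x y * (g y - b) ^ 2 = (∑ x, ∑ y, p x y * g y ^ 2) - b ^ 2 := by
    have : ∀ x y, p x y * (g y - b) ^ 2 =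
      p x y * g y ^ 2 - p x y * g y * (2 * b) + p x y * (b ^ 2) := by
        intros; ring
    simp only [this, Finset.sum_add_distrib, Finset.sum_sub_distrib, hz, hz1, hz2]
    ring
  rw [e1, e2, e3] at h
  have hm := maxCorr_nonneg p hp
  have h3 : √((∑ x, ∑ y, p x y * u x ^ 2) - a ^ 2) * √((∑ x, ∑ y, p x y * g y ^ 2) - b ^ 2) ≤
    √(∑ x, ∑ y, p x y * u x ^ 2) * √(∑ x, ∑ y, p x y * g y ^ 2) := by
    gcongr <;> nlinarith
  have := mul_le_mul_of_nonneg_left h3 hm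
  linarith

/-- Main bound: `W` stochastic kernel. -/
lemma adv_le {X Y : Type*} [Fintype X] [Fintype Y] (W : X → Y → ℝ) (N : ℝ) (hN : 0 < N)
    (hc : (Fintype.card X : ℝ) = N)
    (hW : ∀ x y, 0 ≤ W x y) (hW1 : ∀ x, ∑ y, W x y = 1) (q : X → ℝ) (hq : ∀ x, 0 ≤ q x)
    (f : X → ℕ) (g : Y → ℕ) (S : ℝ) (hS : ∀ i, (∑ m, if f m = i then q m else 0) ≤ S) :
    ∑ x, ∑ y, q x * W x y * (if f x = g y then 1 else 0) ≤
      S + maxCorr (fun x y => N⁻¹ * W x y) * √(N * ∑ x, q x ^ 2) := by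
  set p : X → Y → ℝ := fun x y => N⁻¹ * W x y with hpdef
  have hp : ∀ x y, 0 ≤ p x y := fun x y => mul_nonneg (inv_nonneg.2 hN.le) (hW x y)
  have hp1 : ∑ x, ∑ y, p x y = 1 := by
    simp only [hpdef, ← Finset.mul_sum, hW1]
    simp [hc, hN.ne']
  have hm := maxCorr_nonneg p hp
  set I := univ.image g with hI
  have hgI : ∀ y, g y ∈ I := fun y => Finset.mem_image_of_mem _ (mem_univ y)
  let u : ℕ → X → ℝ := fun i x => if f x = i then N * q x else 0
  let v : ℕ → Y → ℝ := fun i y => if g y = i then 1 else 0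
  have hv1 : ∀ y, ∑ i ∈ I, v i y = 1 := by
    intro y
    simp [v, hgI]
  have hmain := Finset.sum_le_sum fun i (_ : i ∈ I) => cov_le p hp hp1 (u i) (v i)
  rw [Finset.sum_add_distrib, ← Finset.mul_sum] at hmain
  have hL : ∑ x, ∑ y, q x * W x y * (if f x = g y then 1 else 0) =
      ∑ i ∈ I, ∑ x, ∑ y, p x y * u i x * v i y := by
    conv_rhs => rw [Finset.sum_comm]
    refine Finset.sum_congr rfl fun x _ => ?_
    conv_rhs => rw [Finset.sum_comm]
    refine Finset.sum_congr rfl fun y _ => ?_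
    simp only [v, mul_ite, mul_one, mul_zero, Finset.sum_ite_eq, hgI, if_true, u, p]
    split_ifs
    · field_simp
    · rfl
  have hu1 : ∀ i, ∑ x, ∑ y, p x y * u i x ≤ S := by
    intro i
    refine le_trans (le_of_eq ?_) (hS i)
    refine Finset.sum_congr rfl fun x _ => ?_
    simp only [p, ← Finset.mul_sum, ← Finset.sum_mul, hW1, u]
    split_ifs
    · field_simp
    · simp
  have hv2 : ∑ i ∈ I, ∑ x, ∑ y, p x y * v i y = 1 := by
    rw [Finset.sum_comm, ← hp1]
    refine Finset.sum_congr rfl fun x _ => ?_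
    rw [Finset.sum_comm]
    refine Finset.sum_congr rfl fun y _ => ?_
    rw [← Finset.mul_sum, hv1, mul_one]
  have hv0 : ∀ i, 0 ≤ ∑ x, ∑ y, p x y * v i y := fun i =>
    Finset.sum_nonneg fun x _ => Finset.sum_nonneg fun y _ =>
      mul_nonneg (hp x y) (by simp only [v]; split_ifs <;> norm_num)
  have h1 : ∑ i ∈ I, (∑ x, ∑ y, p x y * u i x) * (∑ x, ∑ y, p x y * v i y) ≤ S := by
    calc _ ≤ ∑ i ∈ I, S * (∑ x, ∑ y, p x y * v i y) :=
          Finset.sum_le_sum fun i _ => mul_le_mul_of_nonneg_right (hu1 i) (hv0 i)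
      _ = S := by rw [← Finset.mul_sum, hv2, mul_one]
  have hvsq : ∀ i y, v i y ^ 2 = v i y := by
    intro i y; simp only [v]; split_ifs <;> norm_num
  have hu2 : ∑ i ∈ I, ∑ x, ∑ y, p x y * u i x ^ 2 ≤ N * ∑ x, q x ^ 2 := by
    rw [Finset.sum_comm, Finset.mul_sum]
    refine Finset.sum_le_sum fun x _ => ?_
    simp only [p, ← Finset.mul_sum, ← Finset.sum_mul, hW1, u, ite_pow]
    simp only [ne_eq, OfNat.ofNat_ne_zero, not_false_eq_true, zero_pow, Finset.sum_ite_eq]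
    split_ifs
    · apply le_of_eq; field_simp
    · have := hq x
      simp; positivity
  have h2 : ∑ i ∈ I, √(∑ x, ∑ y, p x y * u i x ^ 2) * √(∑ x, ∑ y, p x y * v i y ^ 2) ≤
      √(N * ∑ x, q x ^ 2) := by
    refine (Real.sum_sqrt_mul_sqrt_le I (fun i => ?_) (fun i => ?_)).trans ?_
    · exact Finset.sum_nonneg fun x _ => Finset.sum_nonneg fun y _ =>
        mul_nonneg (hp x y) (sq_nonneg _)
    · exact Finset.sum_nonneg fun x _ => Finset.sum_nonneg fun y _ =>
        mul_nonneg (hp x y) (sq_nonneg _)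
    simp only [hvsq, hv2, Real.sqrt_one, mul_one]
    exact Real.sqrt_le_sqrt hu2
  rw [hL]
  have := mul_le_mul_of_nonneg_left h2 hm
  linarith

theorem stmt14 (n : ℕ) {C K : Type*} [Fintype C] [Fintype K] [Nonempty K]
    (E : K → Fin (2 ^ n) → C) (ρ : ℝ)
    (hρ : maxCorr (fun (m : Fin (2 ^ n)) (c : C) =>
        ((2 ^ n : ℝ))⁻¹ * ((Fintype.card K : ℝ))⁻¹ *
          ((univ.filter fun k => E k m = c).card : ℝ)) ≤ ρ)
    (phat : Fin (2 ^ n) → ℝ) (hphat : ∀ m, 0 ≤ phat m) (hphat1 : ∑ m, phat m = 1)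
    (t : ℝ) (ht : t ≤ -Real.logb 2 (∑ m, (phat m) ^ 2))
    (f : Fin (2 ^ n) → ℕ) (ftilde : C → ℕ) :
    (∑ m, ∑ c, phat m * (((Fintype.card K : ℝ))⁻¹ *
        ((univ.filter fun k => E k m = c).card : ℝ)) *
        (if f m = ftilde c then 1 else 0)) -
      (⨆ i : ℕ, ∑ m, if f m = i then phat m else 0) ≤
    (2 : ℝ) ^ (((n : ℝ) - t) / 2) * ρ := by
  have hK : (0 : ℝ) < Fintype.card K := by exact_mod_cast Fintype.card_pos
  set W : Fin (2 ^ n) → C → ℝ := fun m c => ((Fintype.card K : ℝ))⁻¹ *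
        ((univ.filter fun k => E k m = c).card : ℝ) with hWdef
  have hW : ∀ m c, 0 ≤ W m c := fun m c => by simp only [W]; positivity
  have hW1 : ∀ m, ∑ c, W m c = 1 := by
    intro m
    have h := Finset.card_eq_sum_card_fiberwise (s := (univ : Finset K)) (t := (univ : Finset C))
      (f := fun k => E k m) (fun _ _ => by simp)
    simp only [W, ← Finset.mul_sum]
    rw [← Nat.cast_sum, ← h, Finset.card_univ, inv_mul_cancel₀ hK.ne']
  have hbdd : BddAbove (Set.range fun i : ℕ => ∑ m, if f m = i then phat m else 0) := by
    refine ⟨1, ?_⟩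
    rintro _ ⟨i, rfl⟩
    rw [← hphat1]
    refine Finset.sum_le_sum fun m _ => ?_
    split_ifs
    · exact le_rfl
    · exact hphat m
  have h := adv_le W (2 ^ n) (by positivity) (by simp) hW hW1 phat hphat f ftilde
    (⨆ i : ℕ, ∑ m, if f m = i then phat m else 0) (fun i => le_ciSup hbdd i)
  have hp : ∀ m c, 0 ≤ (2 ^ n : ℝ)⁻¹ * W m c := fun m c => mul_nonneg (by positivity) (hW m c)
  have hm := maxCorr_nonneg _ hp
  have hρ' : maxCorr (fun m c => (2 ^ n : ℝ)⁻¹ * W m c) ≤ ρ := by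
    simpa only [W, mul_assoc] using hρ
  have hpos : 0 < ∑ m, phat m ^ 2 := by
    refine lt_of_le_of_ne (Finset.sum_nonneg fun m _ => sq_nonneg _) fun h0 => ?_
    have := (Finset.sum_eq_zero_iff_of_nonneg fun m _ => sq_nonneg (phat m)).1 h0.symm
    have h2 : ∑ m, phat m = 0 := Finset.sum_eq_zero fun m hm => by simpa using this m hm
    rw [h2] at hphat1
    exact zero_ne_one hphat1
  have hs : √(2 ^ n * ∑ m, phat m ^ 2) ≤ (2 : ℝ) ^ (((n : ℝ) - t) / 2) := by
    have h1 : ∑ m, phat m ^ 2 ≤ (2 : ℝ) ^ (-t) := by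
      rw [← Real.logb_le_iff_le_rpow (by norm_num) hpos]; linarith
    apply Real.sqrt_le_iff.2
    refine ⟨by positivity, ?_⟩
    rw [← Real.rpow_natCast _ 2, ← Real.rpow_mul (by norm_num)]
    calc (2 : ℝ) ^ n * ∑ m, phat m ^ 2 ≤ (2 : ℝ) ^ n * (2 : ℝ) ^ (-t) := by gcongr
      _ = _ := by
        rw [← Real.rpow_natCast, ← Real.rpow_add (by norm_num)]
        congr 1
        push_cast
        ring
  have h3 : maxCorr (fun m c => (2 ^ n : ℝ)⁻¹ * W m c) * √(2 ^ n * ∑ m, phat m ^ 2) ≤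
      ρ * (2 : ℝ) ^ (((n : ℝ) - t) / 2) :=
    mul_le_mul hρ' hs (Real.sqrt_nonneg _) (hm.trans hρ')
  linarith
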